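/- arXiv:1605.02485 — 2 statements merged into one kernel-verified Lean document; each statement's English description precedes it below -/
import Mathlib

section
/- Let T : ℍⁿ ⇉ V₁ be a maximal H-monotone set-valued map with dom(T) = ℍⁿ, and let λ > 0. Then for every v ∈ ℝ²ⁿ, the resolvent value Q_λ(v) = {η ∈ ℍⁿ : v ∈ ξ₁(η) + λT(η)} is a closed subset of ℍⁿ (with respect to d_H) and is unbounded; in fact, for every η ∈ ℍⁿ one has H_η ∩ Q_λ(v) ≠ ∅. -/
open scoped RealInnerProductSpace Pointwise

noncomputable section

abbrev E (n : ℕ) := EuclideanSpace ℝ (Fin n)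
abbrev Heis (n : ℕ) := E n × E n × ℝ
abbrev V1 (n : ℕ) := WithLp 2 (E n × E n)

/-- The projection ξ₁(x,y,t) = (x,y) onto the first layer V₁ ≅ ℝ²ⁿ. -/
def xi1 {n : ℕ} (η : Heis n) : V1 n := (WithLp.equiv 2 (E n × E n)).symm (η.1, η.2.1)

/-- The horizontal plane through η₀. -/
def Hplane {n : ℕ} (η₀ : Heis n) : Set (Heis n) :=
  {η | η.2.2 = η₀.2.2 + 2 * (⟪η₀.2.1, η.1⟫ - ⟪η₀.1, η.2.1⟫)}

/-- H-monotonicity of a set-valued map T : ℍⁿ ⇉ V₁. -/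
def IsHMonotone {n : ℕ} (T : Heis n → Set (V1 n)) : Prop :=
  ∀ η η', η' ∈ Hplane η → ∀ v ∈ T η, ∀ v' ∈ T η', 0 ≤ ⟪v - v', xi1 η - xi1 η'⟫

/-- Maximal H-monotonicity. -/
def IsMaximalHMonotone {n : ℕ} (T : Heis n → Set (V1 n)) : Prop :=
  IsHMonotone T ∧
    ∀ η v, (∀ η' ∈ Hplane η, ∀ v' ∈ T η', 0 ≤ ⟪v - v', xi1 η - xi1 η'⟫) → v ∈ T η

/-- Heisenberg group law. -/
def hmul {n : ℕ} (η η' : Heis n) : Heis n :=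
  (η.1 + η'.1, η.2.1 + η'.2.1,
    η.2.2 + η'.2.2 + 2 * (⟪η'.1, η.2.1⟫ - ⟪η.1, η'.2.1⟫))

/-- Heisenberg group inverse. -/
def hinv {n : ℕ} (η : Heis n) : Heis n := (-η.1, -η.2.1, -η.2.2)

/-- The Korányi gauge N(x,y,t) = ((‖x‖²+‖y‖²)² + t²)^(1/4). -/
def gaugeN {n : ℕ} (η : Heis n) : ℝ :=
  ((‖η.1‖ ^ 2 + ‖η.2.1‖ ^ 2) ^ 2 + η.2.2 ^ 2) ^ ((1 : ℝ) / 4)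

/-- The Korányi–Cygan distance d_H(η,η') = N(η'⁻¹ ∘ η). -/
def dH {n : ℕ} (η η' : Heis n) : ℝ := gaugeN (hmul (hinv η') η)

/-- The resolventQ Q_λ = (ξ₁ + λT)⁻¹ : V₁ ⇉ ℍⁿ. -/
def resolventQ {n : ℕ} (T : Heis n → Set (V1 n)) (lam : ℝ) (v : V1 n) : Set (Heis n) :=
  {η | ∃ w ∈ T η, v = xi1 η + lam • w}

section Brouwer
open MeasureTheory Metric Set Filter Topology

/-- Interpolation: averaging a bounded-degree family of polynomials. -/
theorem poly_family_const {X : Type*} [MeasurableSpace X] (μ : Measure X)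
    (f : ℝ → X → ℝ) (N : ℕ) (hf : ∀ x, ∃ p : Polynomial ℝ, p.natDegree ≤ N ∧ ∀ s, f s x = p.eval s)
    (hfi : ∀ s, Integrable (f s) μ) (c s0 : ℝ) (hs0 : 0 < s0)
    (hc : ∀ s, 0 ≤ s → s ≤ s0 → ∫ x, f s x ∂μ = c) (s : ℝ) : ∫ x, f s x ∂μ = c := by
  classical
  let S : Finset ℕ := Finset.range (N + 1)
  let nd : ℕ → ℝ := fun i => s0 * (i / (N + 1))
  have hinj : Set.InjOn nd S := by
    intro i _ j _ h
    simp only [nd] at h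
    have h1 := mul_left_cancel₀ hs0.ne' h
    have h2 : (N + 1 : ℝ) ≠ 0 := by positivity
    field_simp at h1
    exact_mod_cast h1
  have key : ∀ x, f s x = ∑ i ∈ S, (Lagrange.basis S nd i).eval s * f (nd i) x := by
    intro x
    obtain ⟨p, hp, hpe⟩ := hf x
    have hdeg : p.degree < (S.card : WithBot ℕ) := by
      refine lt_of_le_of_lt Polynomial.degree_le_natDegree ?_
      simp only [S, Finset.card_range]
      exact_mod_cast Nat.lt_succ_of_le hp
    have := Lagrange.eq_interpolate hinj hdeg
    rw [hpe, this, Lagrange.interpolate_apply, Polynomial.eval_finsetSum]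
    refine Finset.sum_congr rfl fun i _ => ?_
    rw [hpe, Polynomial.eval_mul, Polynomial.eval_C, mul_comm]
  simp_rw [key]
  rw [integral_finsetSum]
  · have h1 : ∀ i ∈ S, ∫ x, (Lagrange.basis S nd i).eval s * f (nd i) x ∂μ
        = (Lagrange.basis S nd i).eval s * c := by
      intro i hi
      rw [integral_const_mul, hc]
      · simp only [nd]; positivity
      · simp only [nd]
        have : (i : ℝ) ≤ N + 1 := by
          have := Finset.mem_range.1 hi
          exact_mod_cast this.le
        have h2 : (i : ℝ) / (N + 1) ≤ 1 := by
          rw [div_le_one (by positivity)]; exact this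
        nlinarith
    rw [Finset.sum_congr rfl h1, ← Finset.sum_mul, ← Polynomial.eval_finsetSum,
      Lagrange.sum_basis hinj (by simp [S])]
    simp
  · intro i _
    exact (hfi _).const_mul _

variable {V : Type*} [NormedAddCommGroup V] [InnerProductSpace ℝ V] [FiniteDimensional ℝ V]

theorem det_poly (A : V →L[ℝ] V) : ∃ p : Polynomial ℝ, p.natDegree ≤ Module.finrank ℝ V ∧
    ∀ s : ℝ, (ContinuousLinearMap.id ℝ V + s • A).det = p.eval s := by
  classical
  let b := Module.finBasis ℝ V
  let M := LinearMap.toMatrix b b (A : V →ₗ[ℝ] V)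
  refine ⟨Matrix.det ((Polynomial.X : Polynomial ℝ) • M.map Polynomial.C +
    (1 : Matrix _ _ ℝ).map Polynomial.C), ?_, ?_⟩
  · simpa using Polynomial.natDegree_det_X_add_C_le M 1
  · intro s
    rw [ContinuousLinearMap.det, ← LinearMap.det_toMatrix b, ← Polynomial.coe_evalRingHom,
      RingHom.map_det]
    congr 1
    ext i j
    by_cases h : i = j
    · simp [M, LinearMap.toMatrix_apply, h]; ring
    · simp [M, LinearMap.toMatrix_apply, h]; ring

theorem norm_poly (L : ℝ) (x y : V) (k : ℕ) : ∃ p : Polynomial ℝ, p.natDegree ≤ k * 2 ∧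
    ∀ s : ℝ, (L - ‖x + s • y‖ ^ 2) ^ k = p.eval s := by
  refine ⟨(Polynomial.C (-‖y‖ ^ 2) * Polynomial.X ^ 2 + Polynomial.C (-2 * inner ℝ x y) *
    Polynomial.X + Polynomial.C (L - ‖x‖ ^ 2)) ^ k, ?_, ?_⟩
  · refine Polynomial.natDegree_pow_le.trans (Nat.mul_le_mul_left _ ?_)
    exact Polynomial.natDegree_quadratic_le
  · intro s
    simp only [Polynomial.eval_pow, Polynomial.eval_add, Polynomial.eval_mul, Polynomial.eval_C,
      Polynomial.eval_X]
    congr 1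
    rw [norm_add_sq_real, norm_smul, inner_smul_right, mul_pow]
    simp
    ring

/-- A form of Brouwer's theorem: a compactly supported perturbation of the identity has a zero. -/
theorem exists_zero_of_compact_perturbation (φ : V → V) (hφ : ContDiff ℝ 1 φ)
    (hsupp : HasCompactSupport φ) : ∃ x, x + φ x = 0 := by
  by_contra hno
  push Not at hno
  borelize V
  let μ : Measure V := volume
  obtain ⟨L, hL⟩ := hφ.lipschitzWith_of_hasCompactSupport hsupp one_ne_zero
  obtain ⟨M0, hM0⟩ := hsupp.isCompact.isBounded.subset_closedBall (0 : V)
  let M : ℝ := max M0 1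
  have hM : 0 < M := lt_of_lt_of_le one_pos (le_max_right _ _)
  let B : Set V := closedBall 0 M
  have hBc : IsCompact B := isCompact_closedBall _ _
  have hout : ∀ x, x ∉ B → φ x = 0 := by
    intro x hx
    by_contra h
    exact hx (closedBall_subset_closedBall (le_max_left _ _) (hM0 (subset_tsupport _ h)))
  have hφc : Continuous φ := hφ.continuous
  -- lower bound on F
  obtain ⟨xm, hxm, hmin⟩ := hBc.exists_isMinOn ⟨0, by simp [B, hM.le]⟩
    (f := fun x => ‖x + φ x‖) (by fun_prop)
  obtain ⟨xM, hxM, hmax⟩ := hBc.exists_isMaxOn ⟨0, by simp [B, hM.le]⟩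
    (f := fun x => ‖x + φ x‖) (by fun_prop)
  let δ : ℝ := min ‖xm + φ xm‖ M
  have hδ : 0 < δ := lt_min (norm_pos_iff.2 (hno xm)) hM
  have hδM : δ ≤ M := min_le_right _ _
  let Λ : ℝ := ‖xM + φ xM‖ ^ 2 + M ^ 2 + 1
  have hFl : ∀ x ∈ B, δ ≤ ‖x + φ x‖ := fun x hx => (min_le_left _ _).trans (hmin hx)
  have hFu : ∀ x ∈ B, ‖x + φ x‖ ^ 2 ≤ Λ := fun x hx => by
    have : ‖x + φ x‖ ≤ ‖xM + φ xM‖ := hmax hx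
    have := pow_le_pow_left₀ (norm_nonneg _) this 2
    simp only [Λ]; nlinarith
  let D : ℝ → V → ℝ := fun s x => (ContinuousLinearMap.id ℝ V + s • fderiv ℝ φ x).det
  have hDc : ∀ s, Continuous (D s) := fun s =>
    ContinuousLinearMap.continuous_det.comp
      (continuous_const.add ((hφ.continuous_fderiv one_ne_zero).const_smul s))
  -- small s
  obtain ⟨ε, hε, hdet⟩ : ∃ ε > 0, ∀ A : V →L[ℝ] V, ‖A‖ < ε →
      0 < (ContinuousLinearMap.id ℝ V + A).det := by
    have hc : Continuous fun A : V →L[ℝ] V => (ContinuousLinearMap.id ℝ V + A).det :=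
      ContinuousLinearMap.continuous_det.comp (by fun_prop)
    have h0 : (0 : ℝ) < (ContinuousLinearMap.id ℝ V + (0 : V →L[ℝ] V)).det := by
      simp [ContinuousLinearMap.det]
    have := hc.continuousAt.eventually (lt_mem_nhds h0)
    obtain ⟨ε, hε, h⟩ := Metric.eventually_nhds_iff.1 this
    exact ⟨ε, hε, fun A hA => h (by simpa using hA)⟩
  obtain ⟨s0, hs0, hs0L, hs0ε⟩ : ∃ s0 : ℝ, 0 < s0 ∧ s0 * L < 1 ∧ s0 * L < ε := by
    refine ⟨min 1 ε / (2 * (L + 1)), by positivity, ?_, ?_⟩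
    · have : min 1 ε ≤ 1 := min_le_left _ _
      rw [div_mul_eq_mul_div, div_lt_one (by positivity)]
      nlinarith [L.2, lt_min one_pos hε, L.coe_nonneg]
    · have : min 1 ε ≤ ε := min_le_right _ _
      rw [div_mul_eq_mul_div, div_lt_iff₀ (by positivity)]
      nlinarith [L.2, lt_min one_pos hε, L.coe_nonneg]
  have hfd : ∀ (s : ℝ) (x : V), HasFDerivAt (fun x => x + s • φ x)
      (ContinuousLinearMap.id ℝ V + s • fderiv ℝ φ x) x := fun s x =>
    (hasFDerivAt_id x).fun_add (((hφ.differentiable one_ne_zero) x).hasFDerivAt.fun_const_smul s)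
  have hchange : ∀ s : ℝ, 0 ≤ s → s ≤ s0 → ∀ g : V → ℝ,
      ∫ x in B, g (x + s • φ x) * D s x ∂μ = ∫ x in B, g x ∂μ := by
    intro s hs hss g
    have hsL : s * L < 1 := lt_of_le_of_lt (by gcongr) hs0L
    have hcontr : ∀ y, ∃ x, x + s • φ x = y := by
      intro y
      have hc : ContractingWith (Real.toNNReal s * L) (fun x => y - s • φ x) := by
        refine ⟨?_, ?_⟩
        · rw [← NNReal.coe_lt_coe]; simpa [hs] using hsL
        · refine LipschitzWith.of_dist_le_mul fun a b => ?_
          have h1 := hL.dist_le_mul a b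
          rw [dist_sub_left, dist_smul₀]
          simp only [NNReal.coe_mul, Real.coe_toNNReal s hs, Real.norm_eq_abs, abs_of_nonneg hs]
          rw [mul_assoc]; gcongr
      refine ⟨ContractingWith.fixedPoint _ hc, ?_⟩
      have := hc.fixedPoint_isFixedPt
      have h2 : y - s • φ (ContractingWith.fixedPoint _ hc) = ContractingWith.fixedPoint _ hc := this
      nth_rewrite 1 [← h2]; abel
    have hinj : Function.Injective (fun x => x + s • φ x) := by
      intro a b hab
      have hab : a + s • φ a = b + s • φ b := hab
      have h1 := hL.dist_le_mul a b
      have h3 : a - b = s • (φ b - φ a) := by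
        rw [smul_sub]; linear_combination (norm := module) hab
      have h2 : dist a b ≤ s * (L * dist a b) := by
        have : dist a b = s * dist (φ a) (φ b) := by
          rw [dist_eq_norm, h3, norm_smul, dist_comm, dist_eq_norm, Real.norm_eq_abs,
            abs_of_nonneg hs]
        nlinarith
      have : dist a b ≤ 0 := by nlinarith [dist_nonneg (x := a) (y := b)]
      exact dist_le_zero.1 this
    have himg : (fun x => x + s • φ x) '' B = B := by
      ext y
      constructor
      · rintro ⟨x, hx, rfl⟩
        by_contra h
        have h1 := hinj (a₁ := x + s • φ x) (a₂ := x) (by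
          simp only at h; simp [hout _ h])
        simp only [h1] at h
        exact h hx
      · intro hy
        obtain ⟨x, hx⟩ := hcontr y
        refine ⟨x, ?_, hx⟩
        by_contra h
        rw [hout x h] at hx
        simp at hx
        exact h (hx ▸ hy)
    have := integral_image_eq_integral_abs_det_fderiv_smul μ (measurableSet_closedBall (x := (0:V)) (ε := M))
      (fun x _ => (hfd s x).hasFDerivWithinAt) hinj.injOn g
    change ∫ x in (fun x => x + s • φ x) '' B, g x ∂μ = _ at this
    rw [himg] at this
    rw [this]
    refine setIntegral_congr_fun measurableSet_closedBall fun x _ => ?_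
    have hpos : 0 < D s x := by
      refine hdet _ ?_
      have h1 : ‖fderiv ℝ φ x‖ ≤ L := norm_fderiv_le_of_lipschitz ℝ hL
      rw [norm_smul, Real.norm_eq_abs, abs_of_nonneg hs]
      exact lt_of_le_of_lt (by gcongr) hs0ε
    simp only [smul_eq_mul]
    rw [mul_comm, show |(ContinuousLinearMap.id ℝ V + s • fderiv ℝ φ x).det| = D s x from
      abs_of_pos hpos]
  have hk : ∀ k : ℕ, ∫ x in B, (Λ - ‖x + φ x‖ ^ 2) ^ k * D 1 x ∂μ
      = ∫ x in B, (Λ - ‖x‖ ^ 2) ^ k ∂μ := by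
    intro k
    have := poly_family_const (μ.restrict B) (fun s x => (Λ - ‖x + s • φ x‖ ^ 2) ^ k * D s x)
      (k * 2 + Module.finrank ℝ V) ?_ ?_ (∫ x in B, (Λ - ‖x‖ ^ 2) ^ k ∂μ) s0 hs0 ?_ 1
    · simpa using this
    · intro x
      obtain ⟨p, hp, hp'⟩ := norm_poly Λ x (φ x) k
      obtain ⟨q, hq, hq'⟩ := det_poly (fderiv ℝ φ x)
      refine ⟨p * q, Polynomial.natDegree_mul_le.trans (add_le_add hp hq), fun s => ?_⟩
      rw [Polynomial.eval_mul, ← hp', ← hq']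
    · intro s
      have : Continuous fun x => (Λ - ‖x + s • φ x‖ ^ 2) ^ k * D s x := by
        have := hDc s
        fun_prop
      exact this.continuousOn.integrableOn_compact hBc
    · intro s h1 h2
      exact hchange s h1 h2 (fun y => (Λ - ‖y‖ ^ 2) ^ k)
  -- bounds
  have hΛM : M ^ 2 < Λ := by simp only [Λ]; nlinarith [sq_nonneg ‖xM + φ xM‖]
  have hδM2 : δ ^ 2 ≤ M ^ 2 := by gcongr
  let a : ℝ := Λ - δ ^ 2
  let b : ℝ := Λ - (δ / 2) ^ 2
  have ha : 0 < a := by simp only [a]; linarith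
  have hab : a < b := by simp only [a, b]; nlinarith
  have hup : ∀ k : ℕ, ∫ x in B, (Λ - ‖x + φ x‖ ^ 2) ^ k * D 1 x ∂μ
      ≤ a ^ k * ∫ x in B, |D 1 x| ∂μ := by
    intro k
    rw [← integral_const_mul]
    have h1 := hDc 1
    refine setIntegral_mono_on ?_ ?_ measurableSet_closedBall ?_
    · exact (by fun_prop : Continuous fun x => (Λ - ‖x + φ x‖ ^ 2) ^ k * D 1 x).continuousOn.integrableOn_compact hBc
    · exact (by fun_prop : Continuous fun x => a ^ k * |D 1 x|).continuousOn.integrableOn_compact hBc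
    · intro x hx
      have h2 := hFl x hx
      have h3 := hFu x hx
      have h4 : 0 ≤ Λ - ‖x + φ x‖ ^ 2 := by linarith
      have h5 : Λ - ‖x + φ x‖ ^ 2 ≤ a := by simp only [a]; gcongr
      calc _ ≤ (Λ - ‖x + φ x‖ ^ 2) ^ k * |D 1 x| := by gcongr; exact le_abs_self _
        _ ≤ _ := by gcongr
  have hlow : ∀ k : ℕ, b ^ k * μ.real (closedBall 0 (δ / 2)) ≤ ∫ x in B, (Λ - ‖x‖ ^ 2) ^ k ∂μ := by
    intro k
    have hcont : Continuous fun x : V => (Λ - ‖x‖ ^ 2) ^ k := by fun_prop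
    have h1 : ∫ x in closedBall (0 : V) (δ / 2), (Λ - ‖x‖ ^ 2) ^ k ∂μ
        ≤ ∫ x in B, (Λ - ‖x‖ ^ 2) ^ k ∂μ := by
      refine setIntegral_mono_set (hcont.continuousOn.integrableOn_compact hBc) ?_ ?_
      · refine (ae_restrict_iff' measurableSet_closedBall).2 (Eventually.of_forall fun x hx => ?_)
        have : ‖x‖ ≤ M := by simpa using hx
        have : ‖x‖ ^ 2 ≤ M ^ 2 := by gcongr
        exact pow_nonneg (by linarith) k
      · exact (closedBall_subset_closedBall (by linarith)).eventuallyLE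
    refine le_trans ?_ h1
    have h2 : ∫ x in closedBall (0 : V) (δ / 2), b ^ k ∂μ = b ^ k * μ.real (closedBall 0 (δ / 2)) := by
      rw [setIntegral_const, smul_eq_mul, mul_comm]
    rw [← h2]
    refine setIntegral_mono_on ?_ ?_ measurableSet_closedBall ?_
    · exact continuousOn_const.integrableOn_compact (isCompact_closedBall _ _)
    · exact hcont.continuousOn.integrableOn_compact (isCompact_closedBall _ _)
    · intro x hx
      have : ‖x‖ ≤ δ / 2 := by simpa using hx
      have hb : 0 ≤ b := by linarith
      have : b ≤ Λ - ‖x‖ ^ 2 := by simp only [b]; gcongr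
      gcongr
  have hvol : 0 < μ.real (closedBall (0 : V) (δ / 2)) := by
    refine ENNReal.toReal_pos ?_ ?_
    · exact (measure_closedBall_pos μ _ (by linarith)).ne'
    · exact (isCompact_closedBall _ _).measure_lt_top.ne
  set c := μ.real (closedBall (0 : V) (δ / 2))
  set I := ∫ x in B, |D 1 x| ∂μ
  have hcmp : ∀ k : ℕ, (b / a) ^ k ≤ I / c := by
    intro k
    have h1 := (hlow k).trans ((hk k).symm.le.trans (hup k))
    rw [div_pow, div_le_div_iff₀ (by positivity) hvol]
    linarith
  have htend := tendsto_pow_atTop_atTop_of_one_lt ((one_lt_div ha).2 hab)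
  obtain ⟨k, hk'⟩ := (htend.eventually_gt_atTop (I / c)).exists
  exact absurd (hcmp k) (not_le.2 hk')

end Brouwer
section Abstract
open Metric Set Filter Topology

variable {V : Type*} [NormedAddCommGroup V] [InnerProductSpace ℝ V]

/-- Abstract horizontal relation. -/
def ARel (J : V →L[ℝ] V) (p p' : V × ℝ) : Prop := p'.2 = p.2 + 2 * inner ℝ (J p.1) p'.1

/-- Abstract monotonicity. -/
def AMon (J : V →L[ℝ] V) (T : V × ℝ → Set V) : Prop :=
  ∀ p p', ARel J p p' → ∀ v ∈ T p, ∀ v' ∈ T p', 0 ≤ inner ℝ (v - v') (p.1 - p'.1)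

/-- Abstract maximality. -/
def AMax (J : V →L[ℝ] V) (T : V × ℝ → Set V) : Prop :=
  ∀ p v, (∀ p', ARel J p p' → ∀ v' ∈ T p', 0 ≤ inner ℝ (v - v') (p.1 - p'.1)) → v ∈ T p

theorem solve_linear [FiniteDimensional ℝ V] {X : Type*} [TopologicalSpace X] (x0 : X)
    (M : X → V →L[ℝ] V) (hM : ContinuousAt M x0) (b : X → V) (hb : ContinuousAt b x0)
    (hinj : ∀ z, M x0 z = 0 → z = 0) :
    ∃ s : X → V, ContinuousAt s x0 ∧ ∀ᶠ x in 𝓝 x0, M x (s x) = b x := by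
  have hinj' : Function.Injective (M x0).toLinearMap :=
    (injective_iff_map_eq_zero _).2 hinj
  let e : V ≃L[ℝ] V := (LinearEquiv.ofInjectiveEndo (M x0).toLinearMap hinj').toContinuousLinearEquiv
  have he : (e : V →L[ℝ] V) = M x0 := by ext z; rfl
  refine ⟨fun x => (M x).inverse (b x), ?_, ?_⟩
  · have h1 : ContinuousAt ContinuousLinearMap.inverse (M x0) := by
      rw [← he]
      exact (contDiffAt_map_inverse (n := 0) e).continuousAt
    exact (h1.comp hM).clm_apply hb
  · have h2 := e.nhds
    rw [he] at h2
    filter_upwards [hM h2] with x hx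
    obtain ⟨e', he'⟩ := hx
    rw [← he', ContinuousLinearMap.inverse_equiv]
    simp

variable {J : V →L[ℝ] V} {T : V × ℝ → Set V}

theorem dir_bound [FiniteDimensional ℝ V] (hJs : ∀ a b, inner ℝ (J a) b = - inner ℝ (J b) a)
    (hJi : ∀ z, J z = 0 → z = 0) (hT : AMon J T) (hdom : ∀ p, (T p).Nonempty)
    {ι : Type*} [Fintype ι] (b : OrthonormalBasis ι ℝ V) (p0 : V × ℝ) :
    ∃ C : ℝ, ∀ᶠ p in 𝓝 p0, ∀ w ∈ T p, inner ℝ w (∑ j, b j) ≤ C + ‖w‖ / 2 := by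
  classical
  have hJ0 : ∀ a, inner ℝ (J a) a = (0 : ℝ) := fun a => by linarith [hJs a a]
  set h : V := ∑ j, b j with hh
  set zs : V := p0.1 + h with hzs
  set ts : ℝ := p0.2 + 2 * inner ℝ (J p0.1) zs with hts
  let z : ι → V := fun j => zs + b j
  let t : ι → ℝ := fun j => ts + 2 * inner ℝ (J zs) (z j)
  choose wj hwj using fun j => hdom (z j, t j)
  let A : V × ℝ → V →L[ℝ] V := fun p =>
    ∑ j, (innerSL ℝ (J (p.1 - z j))).smulRight (b j)
  let bA : V × ℝ → V := fun p => ∑ j, ((t j - p.2) / 2) • b j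
  have hcoord : ∀ (f : ι → ℝ) (j : ι), inner ℝ (b j) (∑ i, f i • b i) = f j := by
    intro f j
    rw [b.orthonormal.inner_right_fintype]
  have hAapp : ∀ p x, A p x = ∑ j, inner ℝ (J (p.1 - z j)) x • b j := by
    intro p x
    simp [A, inner_sub_left]
  have hAc : Continuous A := by
    refine continuous_finsetSum _ fun j _ => ?_
    have h1 : Continuous fun p : V × ℝ => innerSL ℝ (J (p.1 - z j)) := by fun_prop
    exact ((ContinuousLinearMap.smulRightL ℝ V V).continuous.comp h1).clm_apply continuous_const
  have hbAc : Continuous bA := by fun_prop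
  have hAinj : ∀ x, A p0 x = 0 → x = 0 := by
    intro x hx
    have h1 : ∀ j, inner ℝ (J (h + b j)) x = (0 : ℝ) := by
      intro j
      have h2 := hcoord (fun j => inner ℝ (J (p0.1 - z j)) x) j
      rw [← hAapp, hx, inner_zero_right] at h2
      have h3 : p0.1 - z j = - (h + b j) := by simp only [z, hzs]; abel
      rw [h3, map_neg, inner_neg_left] at h2
      linarith
    have h2 : inner ℝ (J h) x = (0 : ℝ) := by
      have h3 : ∑ j, inner ℝ (J (h + b j)) x = (0 : ℝ) := Finset.sum_eq_zero fun j _ => h1 j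
      have h4 : ∑ j, inner ℝ (J (h + b j)) x
          = (Fintype.card ι : ℝ) * inner ℝ (J h) x + inner ℝ (J h) x := by
        simp only [map_add, inner_add_left, Finset.sum_add_distrib]
        congr 1
        · simp
        · rw [← sum_inner, ← map_sum]
      rw [h4] at h3
      have : ((Fintype.card ι : ℝ) + 1) * inner ℝ (J h) x = 0 := by linarith
      exact (mul_eq_zero.1 this).resolve_left (by positivity)
    have h5 : ∀ j, inner ℝ (b j) (J x) = (0 : ℝ) := by
      intro j
      have h6 := h1 j
      rw [map_add, inner_add_left, h2, zero_add, hJs] at h6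
      rw [real_inner_comm]
      linarith
    apply hJi
    rw [← b.sum_repr' (J x)]
    simp [h5]
  obtain ⟨s, hsc, hs⟩ := solve_linear p0 A hAc.continuousAt bA hbAc.continuousAt hAinj
  have hs0 : s p0 = zs := by
    have h1 := hs.self_of_nhds
    have h2 : A p0 zs = bA p0 := by
      rw [hAapp]
      refine Finset.sum_congr rfl fun j _ => ?_
      congr 1
      simp only [t, hts, map_sub, inner_sub_left]
      rw [hJs (z j) zs]
      ring
    have h3 : A p0 (s p0 - zs) = 0 := by rw [map_sub, h1, h2, sub_self]
    exact sub_eq_zero.1 (hAinj _ h3)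
  let Bm : V × ℝ → V →L[ℝ] V := fun p =>
    ∑ j, (innerSL ℝ (b j)).smulRight (z j - s p)
  have hBapp : ∀ p x, Bm p x = ∑ j, inner ℝ (b j) x • (z j - s p) := by
    intro p x
    simp [Bm]
  have hBc : ContinuousAt Bm p0 := by
    refine tendsto_finsetSum _ fun j _ => ?_
    exact ((ContinuousLinearMap.smulRightL ℝ V V (innerSL ℝ (b j))).continuous.continuousAt).comp
      (continuousAt_const.sub hsc)
  have hB0 : ∀ x, Bm p0 x = x := by
    intro x
    rw [hBapp, hs0]
    simp only [z, add_sub_cancel_left]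
    exact b.sum_repr' x
  obtain ⟨μ, hμc, hμ⟩ := solve_linear p0 Bm hBc (fun p => s p - p.1)
    (hsc.sub continuousAt_fst) (fun x hx => by rwa [hB0] at hx)
  have hμ0 : μ p0 = h := by
    have h1 := hμ.self_of_nhds
    rw [hB0, hs0] at h1
    rw [h1, hzs]; abel
  have hμpos : ∀ᶠ p in 𝓝 p0, ∀ j, 0 < inner ℝ (b j) (μ p) := by
    rw [eventually_all]
    intro j
    have h1 : ContinuousAt (fun p => inner ℝ (b j) (μ p)) p0 := continuousAt_const.inner hμc
    refine h1.eventually (lt_mem_nhds ?_)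
    simp only [hμ0]
    have := hcoord (fun _ => 1) j
    simp only [one_smul] at this
    rw [← hh] at this
    rw [this]; exact one_pos
  let G : V × ℝ → ℝ := fun p => ∑ j, inner ℝ (b j) (μ p) * inner ℝ (wj j) (z j - s p)
  have hGc : ContinuousAt G p0 := by
    refine tendsto_finsetSum _ fun j _ => ?_
    exact (continuousAt_const.inner hμc).mul (continuousAt_const.inner (continuousAt_const.sub hsc))
  have hGb : ∀ᶠ p in 𝓝 p0, G p < G p0 + 1 := hGc.eventually (gt_mem_nhds (by linarith))
  have hnear : ∀ᶠ p in 𝓝 p0, ‖h - (s p - p.1)‖ < 1 / 2 := by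
    have h1 : ContinuousAt (fun p : V × ℝ => ‖h - (s p - p.1)‖) p0 :=
      (continuousAt_const.sub (hsc.sub continuousAt_fst)).norm
    refine h1.eventually (gt_mem_nhds ?_)
    simp only [hs0, hzs]
    simp
  refine ⟨G p0 + 1, ?_⟩
  filter_upwards [hs, hμ, hμpos, hGb, hnear] with p h1 h2 h3 h4 h5 w hw
  obtain ⟨u, hu⟩ := hdom (s p, p.2 + 2 * inner ℝ (J p.1) (s p))
  have e1 := hT p (s p, p.2 + 2 * inner ℝ (J p.1) (s p)) rfl w hw u hu
  have e2 : ∀ j, inner ℝ u (z j - s p) ≤ inner ℝ (wj j) (z j - s p) := by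
    intro j
    have h6 : inner ℝ (J (p.1 - z j)) (s p) = (t j - p.2) / 2 := by
      have h7 := hcoord (fun j => inner ℝ (J (p.1 - z j)) (s p)) j
      rw [← hAapp, h1, hcoord] at h7
      exact h7.symm
    have h8 := hT (s p, p.2 + 2 * inner ℝ (J p.1) (s p)) (z j, t j) (by
      simp only [ARel]
      rw [map_sub, inner_sub_left] at h6
      rw [hJs (s p) (z j)]
      linarith) u hu (wj j) (hwj j)
    simp only at h8
    rw [← neg_sub (z j) (s p), inner_neg_right, inner_sub_left] at h8
    linarith
  have e3 : inner ℝ u (s p - p.1) ≤ G p := by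
    rw [← h2, hBapp, inner_sum]
    refine Finset.sum_le_sum fun j _ => ?_
    rw [inner_smul_right]
    exact mul_le_mul_of_nonneg_left (e2 j) (h3 j).le
  have e4 : inner ℝ w (s p - p.1) ≤ inner ℝ u (s p - p.1) := by
    simp only at e1
    rw [← neg_sub (s p) p.1, inner_neg_right, inner_sub_left] at e1
    linarith
  have e5 : inner ℝ w (h - (s p - p.1)) ≤ ‖w‖ * (1 / 2) :=
    (real_inner_le_norm _ _).trans (by gcongr)
  have e6 : inner ℝ w h = inner ℝ w (s p - p.1) + inner ℝ w (h - (s p - p.1)) := by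
    rw [← inner_add_right]; congr 1; abel
  rw [e6]
  linarith

theorem locally_bdd [FiniteDimensional ℝ V] (hJs : ∀ a b, inner ℝ (J a) b = - inner ℝ (J b) a)
    (hJi : ∀ z, J z = 0 → z = 0) (hT : AMon J T) (hdom : ∀ p, (T p).Nonempty) (p0 : V × ℝ) :
    ∃ K : ℝ, 0 ≤ K ∧ ∀ᶠ p in 𝓝 p0, ∀ w ∈ T p, ‖w‖ ≤ K := by
  classical
  let b := stdOrthonormalBasis ℝ V
  let ε : (Fin (Module.finrank ℝ V) → Bool) → Fin (Module.finrank ℝ V) → ℝ :=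
    fun σ j => if σ j then 1 else -1
  have hε : ∀ σ j, ε σ j * ε σ j = 1 := by
    intro σ j; simp only [ε]; split_ifs <;> norm_num
  have hex : ∀ σ, ∃ C : ℝ, ∀ᶠ p in 𝓝 p0, ∀ w ∈ T p,
      inner ℝ w (∑ j, ε σ j • b j) ≤ C + ‖w‖ / 2 := by
    intro σ
    have hon : Orthonormal ℝ (fun j => ε σ j • b j) := by
      rw [orthonormal_iff_ite]
      intro i j
      rw [inner_smul_left, inner_smul_right, orthonormal_iff_ite.1 b.orthonormal]
      split_ifs with hij
      · subst hij; simp [hε]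
      · simp
    have hsp : ⊤ ≤ Submodule.span ℝ (Set.range fun j => ε σ j • b j) := by
      rw [← b.toBasis.span_eq, Submodule.span_le]
      rintro _ ⟨j, rfl⟩
      have h1 : b j = ε σ j • (ε σ j • b j) := by rw [smul_smul, hε, one_smul]
      rw [OrthonormalBasis.coe_toBasis, h1]
      exact Submodule.smul_mem _ _ (Submodule.subset_span ⟨j, rfl⟩)
    have := dir_bound hJs hJi hT hdom (OrthonormalBasis.mk hon hsp) p0
    simpa using this
  choose C hC using hex
  refine ⟨2 * ∑ σ, |C σ|, by positivity, ?_⟩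
  filter_upwards [eventually_all.2 hC] with p hp w hw
  let σ : Fin (Module.finrank ℝ V) → Bool := fun j => decide (0 ≤ inner ℝ (b j) w)
  have h1 := hp σ w hw
  have h2 : inner ℝ w (∑ j, ε σ j • b j) = ∑ j, |inner ℝ (b j) w| := by
    rw [inner_sum]
    refine Finset.sum_congr rfl fun j _ => ?_
    rw [inner_smul_right, real_inner_comm]
    simp only [ε, σ, decide_eq_true_eq]
    split_ifs with h
    · rw [abs_of_nonneg h, one_mul]
    · rw [abs_of_neg (not_le.1 h)]; ring
  have h3 : ‖w‖ ≤ ∑ j, |inner ℝ (b j) w| := by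
    nth_rewrite 1 [← b.sum_repr' w]
    refine (norm_sum_le _ _).trans (Finset.sum_le_sum fun j _ => ?_)
    simp [norm_smul]
  have h4 : |C σ| ≤ ∑ σ, |C σ| :=
    Finset.single_le_sum (f := fun σ => |C σ|) (fun _ _ => abs_nonneg _) (Finset.mem_univ σ)
  have h5 := le_abs_self (C σ)
  rw [h2] at h1
  linarith

theorem compact_bdd [FiniteDimensional ℝ V] (hJs : ∀ a b, inner ℝ (J a) b = - inner ℝ (J b) a)
    (hJi : ∀ z, J z = 0 → z = 0) (hT : AMon J T) (hdom : ∀ p, (T p).Nonempty)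
    (S : Set (V × ℝ)) (hS : IsCompact S) : ∃ K : ℝ, 0 ≤ K ∧ ∀ p ∈ S, ∀ w ∈ T p, ‖w‖ ≤ K := by
  refine hS.induction_on (p := fun S => ∃ K : ℝ, 0 ≤ K ∧ ∀ p ∈ S, ∀ w ∈ T p, ‖w‖ ≤ K)
    ⟨0, le_rfl, by simp⟩ ?_ ?_ ?_
  · rintro s t hst ⟨K, h0, hK⟩
    exact ⟨K, h0, fun p hp => hK p (hst hp)⟩
  · rintro s t ⟨K, h0, hK⟩ ⟨K', h0', hK'⟩
    refine ⟨max K K', le_max_of_le_left h0, ?_⟩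
    rintro p (hp | hp) w hw
    · exact (hK p hp w hw).trans (le_max_left _ _)
    · exact (hK' p hp w hw).trans (le_max_right _ _)
  · intro x _
    obtain ⟨K, h0, hK⟩ := locally_bdd hJs hJi hT hdom x
    exact ⟨_, mem_nhdsWithin_of_mem_nhds hK, K, h0, fun p hp => hp⟩

theorem key_ineq [FiniteDimensional ℝ V] (hJs : ∀ a b, inner ℝ (J a) b = - inner ℝ (J b) a)
    (hJi : ∀ z, J z = 0 → z = 0) (hT : AMon J T) (hdom : ∀ p, (T p).Nonempty)
    (p p' : V × ℝ) (hp : ARel J p p') (w' : V) (hw' : w' ∈ T p') (r : ℝ) (hr : 0 < r) :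
    ∀ᶠ q in 𝓝 p, ∀ w ∈ T q, -r ≤ inner ℝ (w - w') (p.1 - p'.1) := by
  have hJ0 : ∀ a, inner ℝ (J a) a = (0 : ℝ) := fun a => by linarith [hJs a a]
  by_cases hd : p.1 - p'.1 = 0
  · refine Eventually.of_forall fun q w _ => ?_
    rw [hd, inner_zero_right]; linarith
  set d := p.1 - p'.1 with hdd
  let m : V := (1 / 2 : ℝ) • (p.1 + p'.1)
  let den : V × ℝ → ℝ := fun q => inner ℝ (J (q.1 - p'.1)) (J d)
  let c : V × ℝ → ℝ := fun q => ((p'.2 - q.2) / 2 - inner ℝ (J (q.1 - p'.1)) m) / den q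
  have hden0 : den p ≠ 0 := by
    simp only [den]
    rw [← hdd, real_inner_self_eq_norm_sq]
    have : J d ≠ 0 := fun h => hd (hJi _ h)
    positivity
  have hdenc : Continuous den := by fun_prop
  have hcc : ContinuousAt c p := by
    refine ContinuousAt.div ?_ hdenc.continuousAt hden0
    fun_prop
  have hc0 : c p = 0 := by
    simp only [c]
    rw [div_eq_zero_iff]; left
    have h1 : p'.2 = p.2 + 2 * inner ℝ (J p.1) p'.1 := hp
    simp only [m, inner_smul_right, inner_add_right, map_sub, inner_sub_left, hJ0]
    rw [hJs p'.1 p.1, h1]; ring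
  let s : V × ℝ → V := fun q => m + c q • J d
  have hsc : ContinuousAt s p := continuousAt_const.add (hcc.smul continuousAt_const)
  have hs0 : s p = m := by simp [s, hc0]
  let Q : V × ℝ → V × ℝ := fun q => (s q, q.2 + 2 * inner ℝ (J q.1) (s q))
  have hQc : ContinuousAt Q p := by
    refine hsc.prodMk (continuousAt_snd.add (continuousAt_const.mul ?_))
    exact (J.continuous.continuousAt.comp continuousAt_fst).inner hsc
  obtain ⟨K1, hK1, hb1⟩ := locally_bdd hJs hJi hT hdom p
  obtain ⟨K2, hK2, hb2⟩ := locally_bdd hJs hJi hT hdom (Q p)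
  have hb2' := hQc.eventually hb2
  let e : ℝ := r / (K1 + K2 + K2 + ‖w'‖ + 1)
  have hpos : 0 < K1 + K2 + K2 + ‖w'‖ + 1 := by positivity
  have he : 0 < e := by positivity
  have hee : (K1 + K2) * e + (K2 + ‖w'‖) * e ≤ r := by
    have : e * (K1 + K2 + K2 + ‖w'‖ + 1) = r := by simp only [e]; field_simp
    nlinarith
  have hn1 : ∀ᶠ q in 𝓝 p, ‖d - (2 : ℝ) • (q.1 - s q)‖ < e := by
    have h1 : ContinuousAt (fun q : V × ℝ => ‖d - (2 : ℝ) • (q.1 - s q)‖) p :=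
      (continuousAt_const.sub ((continuousAt_fst.sub hsc).const_smul (2 : ℝ))).norm
    refine h1.eventually (gt_mem_nhds ?_)
    have : d - (2 : ℝ) • (p.1 - s p) = 0 := by
      rw [hs0]; simp only [m, hdd]; module
    simp only [this, norm_zero]; exact he
  have hn2 : ∀ᶠ q in 𝓝 p, ‖d - (2 : ℝ) • (s q - p'.1)‖ < e := by
    have h1 : ContinuousAt (fun q : V × ℝ => ‖d - (2 : ℝ) • (s q - p'.1)‖) p :=
      (continuousAt_const.sub ((hsc.sub continuousAt_const).const_smul (2 : ℝ))).norm
    refine h1.eventually (gt_mem_nhds ?_)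
    have : d - (2 : ℝ) • (s p - p'.1) = 0 := by
      rw [hs0]; simp only [m, hdd]; module
    simp only [this, norm_zero]; exact he
  filter_upwards [hb1, hb2', hn1, hn2, hdenc.continuousAt.eventually_ne hden0]
    with q h1 h2 h3 h4 h5 w hw
  obtain ⟨u, hu⟩ := hdom (Q q)
  have hwn := h1 w hw
  have hun := h2 u hu
  have e1 : 0 ≤ inner ℝ (w - u) (q.1 - s q) := hT q (Q q) rfl w hw u hu
  have e2 : 0 ≤ inner ℝ (u - w') (s q - p'.1) := by
    refine hT (Q q) p' ?_ u hu w' hw'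
    simp only [ARel, Q]
    have h6 : inner ℝ (J (q.1 - p'.1)) (s q) = (p'.2 - q.2) / 2 := by
      have h7 : c q * den q = (p'.2 - q.2) / 2 - inner ℝ (J (q.1 - p'.1)) m := by
        simp only [c]; field_simp
      change inner ℝ (J (q.1 - p'.1)) (m + c q • J d) = _
      rw [inner_add_right, inner_smul_right (J (q.1 - p'.1)) (J d)]
      change _ + c q * den q = _
      rw [h7]; ring
    rw [map_sub, inner_sub_left] at h6
    rw [hJs (s q) p'.1]
    linarith
  have e3 : inner ℝ (w - w') d = 2 * inner ℝ (w - u) (q.1 - s q)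
      + inner ℝ (w - u) (d - (2 : ℝ) • (q.1 - s q)) + (2 * inner ℝ (u - w') (s q - p'.1)
      + inner ℝ (u - w') (d - (2 : ℝ) • (s q - p'.1))) := by
    rw [inner_sub_right (w - u) d, inner_sub_right (u - w') d, inner_smul_right, inner_smul_right]
    have : w - w' = (w - u) + (u - w') := by abel
    rw [this, inner_add_left]; ring
  have e4 : |inner ℝ (w - u) (d - (2 : ℝ) • (q.1 - s q))| ≤ (K1 + K2) * e :=
    (abs_real_inner_le_norm _ _).trans (by
      have := norm_sub_le w u
      gcongr
      linarith)
  have e5 : |inner ℝ (u - w') (d - (2 : ℝ) • (s q - p'.1))| ≤ (K2 + ‖w'‖) * e :=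
    (abs_real_inner_le_norm _ _).trans (by
      have := norm_sub_le u w'
      gcongr
      linarith)
  rw [e3]
  have := (abs_le.1 e4).1
  have := (abs_le.1 e5).1
  linarith

theorem abs_closed [FiniteDimensional ℝ V] (hJs : ∀ a b, inner ℝ (J a) b = - inner ℝ (J b) a)
    (hJi : ∀ z, J z = 0 → z = 0) (hT : AMon J T) (hmax : AMax J T) (hdom : ∀ p, (T p).Nonempty)
    (lam : ℝ) (v : V) : IsClosed {p : V × ℝ | lam⁻¹ • (v - p.1) ∈ T p} := by
  rw [isClosed_iff_frequently]
  intro p hp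
  refine hmax p _ fun p' hpp' w' hw' => ?_
  by_contra hneg
  push Not at hneg
  set a := inner ℝ (lam⁻¹ • (v - p.1) - w') (p.1 - p'.1) with ha
  have h1 := key_ineq hJs hJi hT hdom p p' hpp' w' hw' (-a / 2) (by linarith)
  have h2 : ∀ᶠ q : V × ℝ in 𝓝 p, inner ℝ (lam⁻¹ • (v - q.1) - w') (p.1 - p'.1) < a / 2 := by
    have h3 : Continuous fun q : V × ℝ => inner ℝ (lam⁻¹ • (v - q.1) - w') (p.1 - p'.1) := by
      fun_prop
    exact h3.continuousAt.eventually (gt_mem_nhds (by linarith))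
  obtain ⟨q, hq, h4, h5⟩ := (hp.and_eventually (h1.and h2)).exists
  have := h4 _ hq
  linarith

theorem abs_meets [FiniteDimensional ℝ V] (hJs : ∀ a b, inner ℝ (J a) b = - inner ℝ (J b) a)
    (hJi : ∀ z, J z = 0 → z = 0) (hT : AMon J T) (hmax : AMax J T) (hdom : ∀ p, (T p).Nonempty)
    (lam : ℝ) (hlam : 0 < lam) (v : V) (p0 : V × ℝ) :
    ∃ p, ARel J p0 p ∧ lam⁻¹ • (v - p.1) ∈ T p := by
  let P : V → V × ℝ := fun z => (z, p0.2 + 2 * inner ℝ (J p0.1) z)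
  have hPc : Continuous P := by fun_prop
  obtain ⟨w0, hw0⟩ := hdom p0
  set z0 := p0.1 with hz0
  let C : ℝ := lam * ‖w0‖ + ‖v - z0‖
  have hC : 0 ≤ C := by positivity
  let R : ℝ := C + 1
  have hR : 0 < R := by positivity
  obtain ⟨K, hK, hKb⟩ := compact_bdd hJs hJi hT hdom (P '' closedBall z0 (2 * R + 1))
    ((isCompact_closedBall _ _).image hPc)
  let ε0 : ℝ := min 1 (1 / (2 * lam * (K + ‖w0‖ + 1)))
  have hε0 : 0 < ε0 := by positivity
  have hε01 : ε0 ≤ 1 := min_le_left _ _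
  have hε0K : lam * ((K + ‖w0‖) * ε0) < 1 := by
    have h1 : ε0 ≤ 1 / (2 * lam * (K + ‖w0‖ + 1)) := min_le_right _ _
    rw [le_div_iff₀ (by positivity)] at h1
    have : 0 ≤ ‖w0‖ := norm_nonneg _
    have : 0 < lam * ε0 := by positivity
    nlinarith [mul_nonneg (mul_nonneg hlam.le hε0.le) (add_nonneg hK (norm_nonneg w0))]
  -- approximate solutions
  have happ : ∀ ε, 0 < ε → ε ≤ ε0 → ∃ x ∈ closedBall z0 R,
      lam⁻¹ • (v - x) ∈ convexHull ℝ {w | ∃ y ∈ ball x ε, w ∈ T (P y)} := by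
    intro ε hε hεε
    obtain ⟨f, hf⟩ := exists_contMDiffMap_forall_mem_convex_of_local_const
      (I := modelWithCornersSelf ℝ V) (n := 1)
      (t := fun x : V => convexHull ℝ {w | ∃ y ∈ ball x ε, w ∈ T (P y)})
      (fun x => convex_convexHull ℝ _) (by
        intro x
        obtain ⟨w, hw⟩ := hdom (P x)
        refine ⟨w, ?_⟩
        filter_upwards [ball_mem_nhds x hε] with y hy
        exact subset_convexHull ℝ _ ⟨x, mem_ball_comm.1 hy, hw⟩)
    have hfs : ContDiff ℝ 1 f := by
      have := f.contMDiff.contDiff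
      simpa using this
    have hcoer : ∀ x ∈ closedBall z0 (2 * R), -((K + ‖w0‖) * ε) ≤ inner ℝ (f x - w0) (x - z0) := by
      intro x hx
      have hsub : {w | ∃ y ∈ ball x ε, w ∈ T (P y)} ⊆
          {w | inner ℝ w0 (x - z0) - (K + ‖w0‖) * ε ≤ inner ℝ w (x - z0)} := by
        rintro w ⟨y, hy, hw⟩
        have h1 := hT p0 (P y) rfl w0 hw0 w hw
        have hyx : ‖x - y‖ ≤ ε := by
          rw [← dist_eq_norm, dist_comm]; exact (mem_ball.1 hy).le
        have hyb : y ∈ closedBall z0 (2 * R + 1) := by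
          rw [mem_closedBall] at hx ⊢
          have := dist_triangle y x z0
          have := (mem_ball.1 hy).le
          linarith
        have hwK := hKb _ ⟨y, hyb, rfl⟩ w hw
        have h2 : 0 ≤ inner ℝ (w - w0) (y - z0) := by
          have : inner ℝ (w - w0) (y - z0) = inner ℝ (w0 - w) (z0 - y) := by
            rw [← neg_sub w w0, ← neg_sub y z0, inner_neg_neg]
          rw [this]; exact h1
        have h3 : |inner ℝ (w - w0) (x - y)| ≤ (K + ‖w0‖) * ε :=
          (abs_real_inner_le_norm _ _).trans (by
            have := norm_sub_le w w0
            gcongr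
            linarith)
        have h4 : inner ℝ (w - w0) (x - z0) = inner ℝ (w - w0) (x - y) + inner ℝ (w - w0) (y - z0) := by
          rw [← inner_add_right]; congr 1; abel
        have h5 := (abs_le.1 h3).1
        rw [inner_sub_left] at h4
        simp only [mem_ofPred_eq]
        linarith
      have hconv : Convex ℝ {w | inner ℝ w0 (x - z0) - (K + ‖w0‖) * ε ≤ inner ℝ w (x - z0)} := by
        have : IsLinearMap ℝ (fun w : V => (inner ℝ w (x - z0) : ℝ)) :=
          ⟨fun a b => inner_add_left _ _ _, fun c a => by simp [inner_smul_left]⟩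
        exact convex_halfSpace_ge this _
      have := convexHull_min hsub hconv (hf x)
      simp only [mem_ofPred_eq] at this
      rw [inner_sub_left]; linarith
    let χ : ContDiffBump z0 := ⟨R, 2 * R, hR, by linarith⟩
    -- recentred perturbation
    let ψ : V → V := fun y => χ (y + z0) • (lam • f (y + z0) - v + z0)
    have hψ : ContDiff ℝ 1 ψ := by
      have h1 : ContDiff ℝ 1 fun y : V => y + z0 := by fun_prop
      have h2 : ContDiff ℝ 1 fun y : V => χ (y + z0) := χ.contDiff.comp h1
      have h3 : ContDiff ℝ 1 fun y : V => f (y + z0) := hfs.comp h1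
      exact h2.smul (((h3.const_smul lam).sub contDiff_const).add contDiff_const)
    have hψs : HasCompactSupport ψ := by
      refine HasCompactSupport.intro (isCompact_closedBall (0 : V) (2 * R)) fun y hy => ?_
      have : χ (y + z0) = 0 := by
        refine χ.zero_of_le_dist ?_
        rw [mem_closedBall, dist_zero_right] at hy
        simp only [dist_eq_norm, add_sub_cancel_right]
        exact (not_le.1 hy).le
      simp [ψ, this]
    obtain ⟨y, hy⟩ := exists_zero_of_compact_perturbation ψ hψ hψs
    obtain ⟨x, rfl⟩ : ∃ x, y = x - z0 := ⟨y + z0, by abel⟩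
    simp only [ψ, sub_add_cancel] at hy
    have hxR : x ∈ closedBall z0 R := by
      by_contra hx
      rw [mem_closedBall, dist_eq_norm, not_le] at hx
      have h0 : inner ℝ (x - z0 + χ x • (lam • f x - v + z0)) (x - z0) = (0 : ℝ) := by
        rw [hy, inner_zero_left]
      rw [inner_add_left, real_inner_self_eq_norm_sq, inner_smul_left] at h0
      simp only [conj_trivial] at h0
      by_cases hx2 : x ∈ closedBall z0 (2 * R)
      · have h1 := hcoer x hx2
        have h2 : inner ℝ (lam • f x - v + z0) (x - z0) = lam * inner ℝ (f x - w0) (x - z0)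
            + inner ℝ (lam • w0 - (v - z0)) (x - z0) := by
          rw [show lam * inner ℝ (f x - w0) (x - z0) = inner ℝ (lam • (f x - w0)) (x - z0) by
            rw [real_inner_smul_left]]
          rw [← inner_add_left]; congr 1; module
        have h3 : |inner ℝ (lam • w0 - (v - z0)) (x - z0)| ≤ C * ‖x - z0‖ :=
          (abs_real_inner_le_norm _ _).trans (by
            have := norm_sub_le (lam • w0) (v - z0)
            rw [norm_smul, Real.norm_eq_abs, abs_of_pos hlam] at this
            gcongr)
        have h4 := (abs_le.1 h3).1
        have h5 : lam * ((K + ‖w0‖) * ε) < 1 := lt_of_le_of_lt (by gcongr) hε0K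
        have h6 : -(C * ‖x - z0‖) - 1 ≤ inner ℝ (lam • f x - v + z0) (x - z0) := by
          rw [h2]; nlinarith
        have h7 : χ x * (-(C * ‖x - z0‖) - 1) ≤ χ x * inner ℝ (lam • f x - v + z0) (x - z0) :=
          mul_le_mul_of_nonneg_left h6 χ.nonneg
        have h8 : -(C * ‖x - z0‖) - 1 ≤ χ x * (-(C * ‖x - z0‖) - 1) := by
          have : 0 ≤ C * ‖x - z0‖ := by positivity
          nlinarith [χ.le_one (x := x)]
        have h9 : 1 ≤ R := by simp only [R]; linarith
        have h10 : R = C + 1 := rfl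
        nlinarith
      · have h1 : χ x = 0 := by
          refine χ.zero_of_le_dist ?_
          rw [mem_closedBall] at hx2
          exact (not_le.1 hx2).le
        rw [h1, zero_mul, add_zero] at h0
        have : 0 < ‖x - z0‖ := hR.trans hx
        have := pow_pos this 2
        linarith
    refine ⟨x, hxR, ?_⟩
    have h1 : χ x = 1 := χ.one_of_mem_closedBall hxR
    rw [h1, one_smul] at hy
    have h2 : f x = lam⁻¹ • (v - x) := by
      have : lam • f x = v - x := by
        rw [← sub_eq_zero, ← hy]; abel
      rw [← this, smul_smul, inv_mul_cancel₀ hlam.ne', one_smul]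
    rw [← h2]; exact hf x
  -- pass to the limit
  have hseq : ∀ k : ℕ, ∃ x ∈ closedBall z0 R, lam⁻¹ • (v - x) ∈
      convexHull ℝ {w | ∃ y ∈ ball x (ε0 / (k + 1)), w ∈ T (P y)} := fun k =>
    happ _ (by positivity) (div_le_self hε0.le (by
      have : (0 : ℝ) ≤ k := Nat.cast_nonneg k
      linarith))
  choose x hxb hx using hseq
  obtain ⟨a, _, θ, hθ, hlim⟩ := (isCompact_closedBall z0 R).tendsto_subseq hxb
  refine ⟨P a, rfl, ?_⟩
  refine hmax (P a) _ fun p' hpp' w' hw' => ?_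
  change 0 ≤ inner ℝ (lam⁻¹ • (v - a) - w') (a - p'.1)
  refine le_of_forall_pos_le_add fun r hr => ?_
  have h1 := key_ineq hJs hJi hT hdom (P a) p' hpp' w' hw' r hr
  have h2 := hPc.continuousAt.eventually h1
  obtain ⟨δ, hδ, h3⟩ := Metric.eventually_nhds_iff.1 h2
  have hε : Tendsto (fun k : ℕ => ε0 / ((θ k : ℝ) + 1)) atTop (𝓝 0) :=
    (tendsto_const_div_atTop_nhds_zero_nat ε0).comp
      (tendsto_atTop_mono (fun k => Nat.le_succ_of_le (hθ.id_le k)) tendsto_id : 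
        Tendsto (fun k => θ k + 1) atTop atTop) |>.congr (fun k => by simp)
  have hev : ∀ᶠ k in atTop, -r ≤ inner ℝ (lam⁻¹ • (v - x (θ k)) - w') (a - p'.1) := by
    filter_upwards [hε.eventually (gt_mem_nhds (half_pos hδ)),
      hlim.eventually (ball_mem_nhds a (half_pos hδ))] with k hk1 hk2
    have hsub : {w | ∃ y ∈ ball (x (θ k)) (ε0 / ((θ k : ℝ) + 1)), w ∈ T (P y)} ⊆
        {w | inner ℝ w' (a - p'.1) - r ≤ inner ℝ w (a - p'.1)} := by
      rintro w ⟨y, hy, hw⟩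
      have h4 : dist y a < δ := by
        have h5 := dist_triangle y (x (θ k)) a
        have h6 := mem_ball.1 hy
        have h7 := mem_ball.1 hk2
        simp only [Function.comp_apply] at h7
        linarith
      have h5 := h3 h4 w hw
      change -r ≤ inner ℝ (w - w') (a - p'.1) at h5
      rw [inner_sub_left] at h5
      simp only [mem_ofPred_eq]
      linarith
    have hconv : Convex ℝ {w | inner ℝ w' (a - p'.1) - r ≤ inner ℝ w (a - p'.1)} := by
      have : IsLinearMap ℝ (fun w : V => (inner ℝ w (a - p'.1) : ℝ)) :=
        ⟨fun a b => inner_add_left _ _ _, fun c a => by simp [inner_smul_left]⟩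
      exact convex_halfSpace_ge this _
    have := convexHull_min hsub hconv (hx (θ k))
    simp only [mem_ofPred_eq] at this
    rw [inner_sub_left]; linarith
  have hcont : Continuous fun z : V => inner ℝ (lam⁻¹ • (v - z) - w') (a - p'.1) := by fun_prop
  have := ge_of_tendsto ((hcont.tendsto a).comp hlim) hev
  linarith

end Abstract
section Transfer

/-- Identification of the Heisenberg group with `V₁ × ℝ`. -/
def toHeis {n : ℕ} (p : V1 n × ℝ) : Heis n := (p.1.fst, p.1.snd, p.2)

/-- Inverse identification. -/
def ofHeis {n : ℕ} (η : Heis n) : V1 n × ℝ := (xi1 η, η.2.2)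

theorem ofHeis_continuous {n : ℕ} : Continuous (ofHeis : Heis n → V1 n × ℝ) := by
  have h1 : Continuous fun η : Heis n => (WithLp.toLp 2 (η.1, η.2.1) : V1 n) :=
    (WithLp.prod_continuous_toLp 2 (E n) (E n)).comp (by fun_prop)
  exact h1.prodMk (by fun_prop)

/-- The symplectic map `(x, y) ↦ (y, -x)`. -/
def Jmap (n : ℕ) : V1 n →L[ℝ] V1 n :=
  ((WithLp.prodContinuousLinearEquiv 2 ℝ (E n) (E n)).symm : (E n × E n) →L[ℝ] V1 n) ∘L
    (((ContinuousLinearMap.snd ℝ (E n) (E n)).prod (-(ContinuousLinearMap.fst ℝ (E n) (E n)))) ∘L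
      ((WithLp.prodContinuousLinearEquiv 2 ℝ (E n) (E n)) : V1 n →L[ℝ] (E n × E n)))

theorem Jmap_apply (n : ℕ) (z : V1 n) : Jmap n z = WithLp.toLp 2 (z.snd, -z.fst) := rfl

theorem Jmap_skew (n : ℕ) (a b : V1 n) : inner ℝ (Jmap n a) b = - inner ℝ (Jmap n b) a := by
  rw [Jmap_apply, Jmap_apply, WithLp.prod_inner_apply, WithLp.prod_inner_apply]
  simp only [inner_neg_left]
  have h1 : inner ℝ a.snd b.fst = inner ℝ b.fst a.snd := real_inner_comm _ _
  have h2 : inner ℝ a.fst b.snd = inner ℝ b.snd a.fst := real_inner_comm _ _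
  change inner ℝ a.snd b.fst + -inner ℝ a.fst b.snd = -(inner ℝ b.snd a.fst + -inner ℝ b.fst a.snd)
  rw [h1, h2]; ring

theorem Jmap_inj (n : ℕ) (z : V1 n) (h : Jmap n z = 0) : z = 0 := by
  rw [Jmap_apply] at h
  have h1 : z.snd = 0 := congrArg WithLp.fst h
  have h2 : -z.fst = 0 := congrArg WithLp.snd h
  rw [neg_eq_zero] at h2
  have : z = WithLp.toLp 2 (z.fst, z.snd) := rfl
  rw [this, h1, h2]; rfl

theorem mem_Hplane_iff {n : ℕ} (p p' : V1 n × ℝ) :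
    toHeis p' ∈ Hplane (toHeis p) ↔ ARel (Jmap n) p p' := by
  have h1 : inner ℝ (Jmap n p.1) p'.1
      = inner ℝ p.1.snd p'.1.fst - inner ℝ p.1.fst p'.1.snd := by
    rw [Jmap_apply, WithLp.prod_inner_apply]
    change inner ℝ p.1.snd p'.1.fst + inner ℝ (-p.1.fst) p'.1.snd = _
    rw [inner_neg_left]; ring
  unfold ARel
  rw [h1]
  exact Iff.rfl

end Transfer

/-- Remark 4.1: for a maximal H-monotone map with full domain, every resolventQ value
Q_λ(v) is closed, unbounded, and meets every horizontal plane. -/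
theorem resolvent_closed_unbounded {n : ℕ} (hn : 1 ≤ n)
    (T : Heis n → Set (V1 n)) (hT : IsMaximalHMonotone T)
    (hdom : ∀ η, (T η).Nonempty) (lam : ℝ) (hlam : 0 < lam) :
    ∀ v : V1 n,
      IsClosed (resolventQ T lam v) ∧
      (¬ ∃ R : ℝ, ∀ η ∈ resolventQ T lam v, dH ((0, 0, 0) : Heis n) η ≤ R) ∧
      (∀ η : Heis n, (Hplane η ∩ resolventQ T lam v).Nonempty) := by
  obtain ⟨hmon, hmax⟩ := hT
  let T' : V1 n × ℝ → Set (V1 n) := fun p => T (toHeis p)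
  have hT' : AMon (Jmap n) T' := by
    intro p p' hpp' v hv v' hv'
    have := hmon (toHeis p) (toHeis p') ((mem_Hplane_iff _ _).2 hpp') v hv v' hv'
    exact this
  have hmax' : AMax (Jmap n) T' := by
    intro p v h
    refine hmax (toHeis p) v fun η' hη' v' hv' => ?_
    have := h (ofHeis η') ((mem_Hplane_iff p (ofHeis η')).1 hη') v' hv'
    exact this
  have hdom' : ∀ p, (T' p).Nonempty := fun p => hdom _
  have hQ : ∀ v η, η ∈ resolventQ T lam v ↔ lam⁻¹ • (v - (ofHeis η).1) ∈ T' (ofHeis η) := by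
    intro v η
    constructor
    · rintro ⟨w, hw, rfl⟩
      have h1 : lam⁻¹ • (xi1 η + lam • w - (ofHeis η).1) = w := by
        rw [show (ofHeis η).1 = xi1 η from rfl, add_sub_cancel_left, smul_smul,
          inv_mul_cancel₀ hlam.ne', one_smul]
      rw [h1]; exact hw
    · intro h
      refine ⟨_, h, ?_⟩
      rw [smul_smul, mul_inv_cancel₀ hlam.ne', one_smul, show (ofHeis η).1 = xi1 η from rfl]
      abel
  intro v
  have hmeet : ∀ η : Heis n, (Hplane η ∩ resolventQ T lam v).Nonempty := by
    intro η
    obtain ⟨p, hp1, hp2⟩ := abs_meets (Jmap_skew n) (Jmap_inj n) hT' hmax' hdom' lam hlam v (ofHeis η)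
    exact ⟨toHeis p, (mem_Hplane_iff (ofHeis η) p).2 hp1, (hQ v (toHeis p)).2 hp2⟩
  refine ⟨?_, ?_, hmeet⟩
  · have h1 := abs_closed (Jmap_skew n) (Jmap_inj n) hT' hmax' hdom' lam v
    have h2 : resolventQ T lam v = ofHeis ⁻¹' {p : V1 n × ℝ | lam⁻¹ • (v - p.1) ∈ T' p} := by
      ext η; exact hQ v η
    rw [h2]
    exact h1.preimage ofHeis_continuous
  · rintro ⟨R, hR⟩
    obtain ⟨η, h1, h2⟩ := hmeet ((0, 0, R ^ 2 + 1) : Heis n)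
    have h3 : η.2.2 = R ^ 2 + 1 := by
      have : η.2.2 = _ := h1
      simpa using this
    have h4 := hR η h2
    have h5 : dH ((0, 0, 0) : Heis n) η
        = ((‖η.1‖ ^ 2 + ‖η.2.1‖ ^ 2) ^ 2 + η.2.2 ^ 2) ^ ((1 : ℝ) / 4) := by
      simp [dH, hmul, hinv, gaugeN]
    rw [h5, h3] at h4
    set A := (‖η.1‖ ^ 2 + ‖η.2.1‖ ^ 2) ^ 2 + (R ^ 2 + 1) ^ 2 with hA
    have hA0 : 0 ≤ A := by positivity
    have h6 : (A ^ ((1 : ℝ) / 4)) ^ 4 = A := by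
      rw [← Real.rpow_natCast, ← Real.rpow_mul hA0]; norm_num
    have h7 : (A ^ ((1 : ℝ) / 4)) ^ 4 ≤ R ^ 4 := by
      have : 0 ≤ A ^ ((1 : ℝ) / 4) := by positivity
      gcongr
    rw [h6] at h7
    have h8 : 0 ≤ (‖η.1‖ ^ 2 + ‖η.2.1‖ ^ 2) ^ 2 := by positivity
    nlinarith [sq_nonneg R]
end
end

section
/- Fix h ∈ ℝ and define F : ℝ³ → ℝ³ by F(t,ρ,θ) = (t + ρ cos θ, ρ sin θ, h − 2tρ sin θ), i.e. F(t,ρ,θ) = (0,0,h) ∘ exp(t·(1,0)) ∘ exp(ρ·(cos θ, sin θ)) in the Heisenberg group ℍ¹. Then the absolute value of the determinant of the Jacobian of F equals |det JF(t,ρ,θ)| = 2ρ² |sin θ| for all (t,ρ,θ). -/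
noncomputable section

/-- The map F(t,ρ,θ) = (0,0,h) ∘ exp(t·(1,0)) ∘ exp(ρ·(cos θ, sin θ)) in ℍ¹, written in
coordinates q = (t, ρ, θ): F(q) = (t + ρ cos θ, ρ sin θ, h − 2tρ sin θ). -/
def Fmap (h : ℝ) (q : Fin 3 → ℝ) : Fin 3 → ℝ :=
  ![q 0 + q 1 * Real.cos (q 2), q 1 * Real.sin (q 2), h - 2 * q 0 * q 1 * Real.sin (q 2)]

/-- The Jacobian determinant of F(t,ρ,θ) = (t + ρ cos θ, ρ sin θ, h − 2tρ sin θ) satisfies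
|det JF(t,ρ,θ)| = 2ρ²|sin θ|. -/
theorem abs_det_jacobian_Fmap (h : ℝ) (p : Fin 3 → ℝ) :
    |(Matrix.of fun i j : Fin 3 =>
        fderiv ℝ (fun q : Fin 3 → ℝ => Fmap h q i) p (Pi.single j 1)).det| =
      2 * (p 1) ^ 2 * |Real.sin (p 2)| := by
  have d0 : HasFDerivAt (fun q : Fin 3 → ℝ => q 0)
      (ContinuousLinearMap.proj (R := ℝ) (φ := fun _ : Fin 3 => ℝ) 0) p := hasFDerivAt_apply 0 p
  have d1 : HasFDerivAt (fun q : Fin 3 → ℝ => q 1)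
      (ContinuousLinearMap.proj (R := ℝ) (φ := fun _ : Fin 3 => ℝ) 1) p := hasFDerivAt_apply 1 p
  have d2 : HasFDerivAt (fun q : Fin 3 → ℝ => q 2)
      (ContinuousLinearMap.proj (R := ℝ) (φ := fun _ : Fin 3 => ℝ) 2) p := hasFDerivAt_apply 2 p
  have e0 : fderiv ℝ (fun q : Fin 3 → ℝ => Fmap h q 0) p = _ :=
    (d0.add (d1.mul d2.cos)).fderiv
  have e1 : fderiv ℝ (fun q : Fin 3 → ℝ => Fmap h q 1) p = _ :=
    (d1.mul d2.sin).fderiv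
  have e2 : fderiv ℝ (fun q : Fin 3 → ℝ => Fmap h q 2) p = _ :=
    (((d0.const_mul 2).mul d1).mul d2.sin |>.const_sub h).fderiv
  have key : (Matrix.of fun i j : Fin 3 =>
        fderiv ℝ (fun q : Fin 3 → ℝ => Fmap h q i) p (Pi.single j 1)).det =
      -(2 * (p 1) ^ 2 * Real.sin (p 2)) := by
    rw [Matrix.det_fin_three]
    simp only [Matrix.of_apply, e0, e1, e2]
    simp [Pi.single_apply]
    have hc := Real.sin_sq_add_cos_sq (p 2)
    linear_combination (-(2 * (p 1) ^ 2 * Real.sin (p 2))) * hc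
  rw [key, abs_neg, abs_mul, abs_of_nonneg (by positivity)]
end
end
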